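/- arXiv:1410.1103 — 2 statements merged into one kernel-verified Lean document; each statement's English description precedes it below -/
import Mathlib

section
/- (Neighborhood action set at m = 3.) Let m = 3, let σ_1 be the identity ranking (σ_1(i) = i) and let σ_2 be the ranking with σ_2(1)=1, σ_2(2)=3, σ_2(3)=2. Then for every ranking σ of the three objects that does not place object 1 at rank 1 (i.e., σ^{-1}(1) ≠ 1), the set C_{σ_1} ∩ C_{σ_2} is not contained in C_σ. Consequently the neighborhood action set of the neighboring pair {σ_1, σ_2} is exactly {σ_1, σ_2}. -/
/-- SumLoss(σ,r) = Σ_i σ(i)·r(i), where the rank of object `i` is `(σ i : ℕ) + 1`. -/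
noncomputable def sumLoss {m : ℕ} (σ : Equiv.Perm (Fin m)) (r : Fin m → Bool) : ℝ :=
  ∑ i, (((σ i : ℕ) : ℝ) + 1) * (if r i then 1 else 0)

/-- The cell `C_σ`: distributions in the probability simplex over {0,1}^m under which the
ranking σ has minimal expected SumLoss among all rankings. -/
def cell {m : ℕ} (σ : Equiv.Perm (Fin m)) : Set ((Fin m → Bool) → ℝ) :=
  {p | (∀ r, 0 ≤ p r) ∧ (∑ r, p r = 1) ∧
    ∀ σ' : Equiv.Perm (Fin m), ∑ r, p r * sumLoss σ r ≤ ∑ r, p r * sumLoss σ' r}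

/-!
The expected loss of `σ` depends on `p` only through the probabilities that each object is
relevant, so by the rearrangement inequality a distribution `p` lies in `cell σ` iff `σ` ranks the
objects by decreasing probability. The point mass on the `k` top objects of `σ` lies in the cell
of exactly the rankings with these same top `k` objects. If `i` and `j` occupy consecutive ranks
in `σ`, exchanging them alters only one of these top sets, so the remaining point masses lie in
both cells, and together they determine the order of every pair of objects except the pair `{i,
j}` itself.
-/

theorem antivary_iff_forall_sum_mul_le_sum_comp_perm_mul {ι R : Type*} [Fintype ι] [CommRing R]
    [LinearOrder R] [IsStrictOrderedRing R] {f g : ι → R} :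
    Antivary f g ↔ ∀ π : Equiv.Perm ι, ∑ i, f i * g i ≤ ∑ i, f (π i) * g i := by
  classical
  refine ⟨fun h _ ↦ h.sum_mul_le_sum_comp_perm_mul, fun h ↦ ?_⟩
  refine antivary_iff_forall_mul_nonpos.2 fun a b ↦ ?_
  obtain rfl | hab := eq_or_ne a b
  · simp
  have hsum : ∑ i, (f i * g i - f (Equiv.swap a b i) * g i) = (f b - f a) * (g b - g a) := by
    rw [Fintype.sum_eq_add a b hab fun i hi ↦ by
      rw [Equiv.swap_apply_of_ne_of_ne hi.1 hi.2, sub_self]]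
    rw [Equiv.swap_apply_left, Equiv.swap_apply_right]
    ring
  rw [← hsum, Finset.sum_sub_distrib]
  exact sub_nonpos.2 (h (Equiv.swap a b))

theorem equiv_eq_of_forall_lt_imp_lt {α β : Type*} [LinearOrder β] [WellFoundedLT β] {e f : α ≃ β}
    (h : ∀ a b, e a < e b → f a < f b) : e = f := by
  have hmono : StrictMono (f ∘ e.symm) := fun x y hxy ↦ h _ _ (by simpa using hxy)
  have hid : f ∘ e.symm = id := (hmono.range_inj strictMono_id).1 <| by
    rw [(f.surjective.comp e.symm.surjective).range_eq, Set.range_id]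
  ext a
  simpa using (congrFun hid (e a)).symm

theorem exists_mem_Ioc_ne_of_covBy {α : Type*} [LinearOrder α] {x y a b : α} (hxy : x ⋖ y)
    (hab : a < b) (hne : ¬(a = x ∧ b = y)) : ∃ k ∈ Set.Ioc a b, k ≠ y := by
  by_cases hb : b = y
  · subst hb
    have hax : a < x := (hxy.le_of_lt hab).lt_of_ne fun ha ↦ hne ⟨ha, rfl⟩
    exact ⟨x, ⟨hax, hxy.le⟩, hxy.ne⟩
  · exact ⟨b, ⟨hab, le_rfl⟩, hb⟩

section Cell

variable {m : ℕ} {σ τ : Equiv.Perm (Fin m)} {p : (Fin m → Bool) → ℝ} {r : Fin m → Bool}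

/-- The probability that object `i` is relevant when the relevance vector is drawn from `p`. The
formula makes sense for arbitrary weights `p`, so `p` is not required to lie in the simplex. -/
def relevanceProb (p : (Fin m → Bool) → ℝ) (i : Fin m) : ℝ :=
  ∑ r, p r * (if r i then 1 else 0)

theorem relevanceProb_single (r : Fin m → Bool) (i : Fin m) :
    relevanceProb (Pi.single r 1) i = if r i then 1 else 0 := by
  simp only [relevanceProb, Pi.single_apply, ite_mul, one_mul, zero_mul, Finset.sum_ite_eq',
    Finset.mem_univ, if_true]

theorem sum_mul_sumLoss (σ : Equiv.Perm (Fin m)) (p : (Fin m → Bool) → ℝ) :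
    ∑ r, p r * sumLoss σ r = ∑ i, (((σ i : ℕ) : ℝ) + 1) * relevanceProb p i := by
  simp only [sumLoss, relevanceProb, Finset.mul_sum]
  rw [Finset.sum_comm]
  simp only [mul_left_comm]

theorem mem_cell_iff_antivary :
    p ∈ cell σ ↔ p ∈ stdSimplex ℝ (Fin m → Bool) ∧ Antivary σ (relevanceProb p) := by
  have hmin : (∀ σ' : Equiv.Perm (Fin m), ∑ r, p r * sumLoss σ r ≤ ∑ r, p r * sumLoss σ' r) ↔
      Antivary (fun i ↦ ((σ i : ℕ) : ℝ) + 1) (relevanceProb p) := by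
    simp only [sum_mul_sumLoss]
    rw [antivary_iff_forall_sum_mul_le_sum_comp_perm_mul, ← (Equiv.mulLeft σ).forall_congr_right]
    simp only [Equiv.coe_mulLeft, Equiv.Perm.mul_apply]
  have hrank : Antivary (fun i ↦ ((σ i : ℕ) : ℝ) + 1) (relevanceProb p) ↔
      Antivary σ (relevanceProb p) := by
    simp [Antivary]
  rw [← hrank, ← hmin]
  exact and_assoc.symm

theorem single_mem_cell_iff_antivary : Pi.single r 1 ∈ cell σ ↔ Antivary σ r := by
  have hlt (a b : Fin m) :
      relevanceProb (Pi.single r 1) a < relevanceProb (Pi.single r 1) b ↔ r a < r b := by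
    rw [relevanceProb_single, relevanceProb_single]
    cases r a <;> cases r b <;> norm_num
  simp only [mem_cell_iff_antivary, single_mem_stdSimplex, true_and, Antivary, hlt]

theorem single_decide_lt_mem_cell_iff {k : Fin m} :
    Pi.single (fun c ↦ decide (σ c < k)) 1 ∈ cell τ ↔ ∀ a b, σ a < k → k ≤ σ b → τ a ≤ τ b := by
  simp only [single_mem_cell_iff_antivary, Antivary, Bool.lt_iff, decide_eq_false_iff_not,
    decide_eq_true_eq, not_lt]
  exact ⟨fun h a b ha hb ↦ h ⟨hb, ha⟩, fun h a b hab ↦ h b a hab.2 hab.1⟩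

theorem single_decide_lt_mem_cell_inter_cell_mul_swap {i j k : Fin m} (hij : σ i ⋖ σ j)
    (hk : k ≠ σ j) :
    Pi.single (fun c ↦ decide (σ c < k)) 1 ∈ cell σ ∩ cell (σ * Equiv.swap i j) := by
  have hiff : σ i < k ↔ σ j < k :=
    ⟨fun h ↦ (hij.ge_of_gt h).lt_of_ne hk.symm, hij.lt.trans⟩
  have hswap (c : Fin m) : σ (Equiv.swap i j c) < k ↔ σ c < k :=
    iff_of_eq (Equiv.apply_swap_eq_self (v := (σ · < k)) (propext hiff) c)
  refine ⟨single_decide_lt_mem_cell_iff.2 fun a b ha hb ↦ (ha.trans_le hb).le,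
    single_decide_lt_mem_cell_iff.2 fun a b ha hb ↦ ?_⟩
  exact (((hswap a).2 ha).trans_le (not_lt.1 fun h ↦ hb.not_gt ((hswap b).1 h))).le

theorem eq_of_cell_inter_cell_mul_swap_subset {i j : Fin m} (hij : σ i ⋖ σ j)
    (hsub : cell σ ∩ cell (σ * Equiv.swap i j) ⊆ cell τ) (hτ : τ i < τ j) : τ = σ := by
  refine (equiv_eq_of_forall_lt_imp_lt fun a b hab ↦ ?_).symm
  by_cases hne : σ a = σ i ∧ σ b = σ j
  · rwa [σ.injective hne.1, σ.injective hne.2]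
  · obtain ⟨k, ⟨hak, hkb⟩, hkj⟩ := exists_mem_Ioc_ne_of_covBy hij hab hne
    have hle : τ a ≤ τ b := single_decide_lt_mem_cell_iff.1
      (hsub (single_decide_lt_mem_cell_inter_cell_mul_swap hij hkj)) a b hak hkb
    exact hle.lt_of_ne (τ.injective.ne (ne_of_apply_ne σ hab.ne))

theorem neighborhood_action_set_m3_general {i j : Fin m} (hij : σ i ⋖ σ j) :
    {τ : Equiv.Perm (Fin m) | cell σ ∩ cell (σ * Equiv.swap i j) ⊆ cell τ} =
      {σ, σ * Equiv.swap i j} := by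
  refine Set.Subset.antisymm (fun τ hτ ↦ ?_) ?_
  · obtain hlt | hgt := (τ.injective.ne (ne_of_apply_ne σ hij.ne)).lt_or_gt
    · exact Or.inl (eq_of_cell_inter_cell_mul_swap_subset hij hτ hlt)
    -- The same lemma applies with `σ` and `σ * swap i j` exchanged.
    · refine Or.inr (eq_of_cell_inter_cell_mul_swap_subset (i := j) (j := i) ?_ ?_ hgt)
      · simpa using hij
      · rwa [Equiv.swap_comm j i, Equiv.mul_swap_mul_self, Set.inter_comm]
  · rintro τ (rfl | rfl)
    exacts [Set.inter_subset_left, Set.inter_subset_right]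

end Cell

/-- Neighborhood action set at m = 3: for the neighboring pair σ₁ = identity and
σ₂ = (1,3,2) (in Lean, `Equiv.swap 1 2`, with 0-indexed objects), no ranking that fails to
place object 1 (index 0) at the top contains `C_{σ₁} ∩ C_{σ₂}` in its cell; consequently the
neighborhood action set of the pair is exactly {σ₁, σ₂}. -/
theorem neighborhood_action_set_m3 :
    (∀ σ : Equiv.Perm (Fin 3), σ.symm 0 ≠ 0 →
        ¬(cell (1 : Equiv.Perm (Fin 3)) ∩ cell (Equiv.swap 1 2) ⊆ cell σ)) ∧
      {σ : Equiv.Perm (Fin 3) |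
          cell (1 : Equiv.Perm (Fin 3)) ∩ cell (Equiv.swap 1 2) ⊆ cell σ} =
        {1, Equiv.swap 1 2} := by
  have hset := neighborhood_action_set_m3_general (σ := (1 : Equiv.Perm (Fin 3))) (i := 1) (j := 2)
    ⟨by decide, by decide⟩
  rw [one_mul] at hset
  refine ⟨fun σ hσ hsub ↦ hσ ?_, hset⟩
  obtain rfl | rfl := hset.subset hsub <;> decide
end

section
/- (Global observability fails for AUC at m = 4.) Let m = 4, let σ_1 be the identity ranking and σ_{24} the reversal ranking (σ_{24}(i) = 5 − i). Then the loss-difference function d : {0,1}^4 → ℝ, d(r) = AUC(σ_1,r) − AUC(σ_{24},r), does NOT lie in the ℝ-linear span of the family {χ_{j,b} : j ∈ {1,2,3,4}, b ∈ {0,1}}, where χ_{j,b}(r) = 𝟙(r(j)=b). -/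
/-- PairwiseLoss(σ,r) = Σ_i Σ_j 𝟙(σ(i)<σ(j))·𝟙(r(i)<r(j)). -/
noncomputable def pairwiseLoss {m : ℕ} (σ : Equiv.Perm (Fin m)) (r : Fin m → Bool) : ℝ :=
  ∑ i, ∑ j, if σ i < σ j ∧ r i = false ∧ r j = true then (1 : ℝ) else 0

/-- The AUC normalizing factor N(r) = (Σ_i r(i))·(m − Σ_i r(i)). -/
noncomputable def Nfac {m : ℕ} (r : Fin m → Bool) : ℝ :=
  (∑ i, if r i then (1 : ℝ) else 0) * ((m : ℝ) - ∑ i, if r i then (1 : ℝ) else 0)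

/-- AUC(σ,r) = PL(σ,r)/N(r) when N(r) ≠ 0, and 0 by convention when N(r) = 0. -/
noncomputable def auc {m : ℕ} (σ : Equiv.Perm (Fin m)) (r : Fin m → Bool) : ℝ :=
  if Nfac r = 0 then 0 else pairwiseLoss σ r / Nfac r

/-- χ_{j,b}(r) = 𝟙(r(j)=b), a column of a transposed signal matrix under top-1 feedback. -/
noncomputable def chi {m : ℕ} (j : Fin m) (b : Bool) : (Fin m → Bool) → ℝ :=
  fun r => if r j = b then 1 else 0

/-!
Each column `χ_{j,b}` is a modular function on the lattice `{0,1}^m`, so every function `f` in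
their span satisfies `f (x ⊔ y) + f (x ⊓ y) = f x + f y`. With ranks counted from `0`, exactly
`σ j` objects have smaller rank than `j`. For a relevant `j`, the irrelevant ones among them are
what `PL` counts at `j`, while the relevant ones, summed over `j`, number `k choose 2` with
`k = |r|`, whatever `σ` is. Hence `AUC(σ, r) - AUC(τ, r) = (∑_{r(j) = 1} c j) / (k (m - k))` with
`c = σ - τ`. Modularity at two unit vectors `e_i`, `e_j` says
`(c i + c j) / (2 (m - 2)) = (c i + c j) / (m - 1)`, which for `m ≥ 4` forces `c i + c j = 0` for
all `i ≠ j`, hence `c = 0`.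
-/

open Finset

/-- The submodule of modular functions (valuations) on a lattice. It contains every `chi j b`, and
membership is what fails for a difference of AUC losses. -/
def modularFunctions (R L : Type*) [Semiring R] [Lattice L] : Submodule R (L → R) where
  carrier := {f | ∀ x y, f (x ⊔ y) + f (x ⊓ y) = f x + f y}
  zero_mem' := fun _ _ => rfl
  add_mem' := fun {f g} hf hg x y => by
    simp only [Pi.add_apply]
    rw [add_add_add_comm, hf, hg, add_add_add_comm]
  smul_mem' := fun a f hf x y => by
    simp only [Pi.smul_apply, smul_eq_mul]
    rw [← mul_add, hf, mul_add]

theorem sum_card_filter_lt_eq_choose_two {ι α : Type*} [LinearOrder α] {f : ι → α}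
    (hf : Function.Injective f) (s : Finset ι) :
    ∑ j ∈ s, #{i ∈ s | f i < f j} = (#s).choose 2 := by
  classical
  induction s using Finset.induction_on_max_value f with
  | empty => rfl
  | insert a s ha hmax ih =>
    have below_max : #{i ∈ insert a s | f i < f a} = #s := by
      rw [filter_insert, if_neg (lt_irrefl _), filter_true_of_mem]
      exact fun i hi => (hmax i hi).lt_of_ne (hf.ne (ne_of_mem_of_not_mem hi ha))
    have below_old : ∀ j ∈ s, #{i ∈ insert a s | f i < f j} = #{i ∈ s | f i < f j} := by
      intro j hj
      rw [filter_insert, if_neg (hmax j hj).not_gt]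
    rw [sum_insert ha, below_max, sum_congr rfl below_old, ih, card_insert_of_notMem ha,
      Nat.choose_succ_succ', Nat.choose_one_right]

theorem eq_zero_of_pairwise_add_eq_zero {ι M : Type*} [Fintype ι] [AddCommGroup M]
    [IsAddTorsionFree M] {c : ι → M} (hι : 2 < Fintype.card ι)
    (hc : Pairwise fun i j => c i + c j = 0) : c = 0 := by
  funext i
  obtain ⟨j, hji⟩ := Fintype.exists_ne_of_one_lt_card (by lia) i
  obtain ⟨k, hki, hkj⟩ :=
    Cardinal.exists_ne_ne_of_three_le (by rw [Cardinal.mk_fintype]; exact_mod_cast hι) i j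
  have two_nsmul_eq_zero : 2 • c i = 0 := calc
    2 • c i = (c j + c i) + (c k + c i) - (c k + c j) := by abel
    _ = 0 := by rw [hc hji, hc hki, hc hkj]; abel
  exact (nsmul_eq_zero_iff_right two_ne_zero).1 two_nsmul_eq_zero

section

variable {m : ℕ}

theorem span_chi_le_modularFunctions :
    Submodule.span ℝ (Set.range fun p : Fin m × Bool => chi p.1 p.2) ≤
      modularFunctions ℝ (Fin m → Bool) := by
  rw [Submodule.span_le]
  rintro _ ⟨⟨j, b⟩, rfl⟩ x y
  cases b <;> cases hx : x j <;> cases hy : y j <;> simp [chi, hx, hy]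

/-- The relevance vector whose relevant objects are the elements of `s`; it lets losses be written
as sums over finsets. -/
def relevanceVector (s : Finset (Fin m)) : Fin m → Bool := fun i => decide (i ∈ s)

theorem relevanceVector_union (s t : Finset (Fin m)) :
    relevanceVector (s ∪ t) = relevanceVector s ⊔ relevanceVector t := by
  funext i
  simp [relevanceVector]

theorem relevanceVector_inter (s t : Finset (Fin m)) :
    relevanceVector (s ∩ t) = relevanceVector s ⊓ relevanceVector t := by
  funext i
  simp [relevanceVector]

theorem Nfac_relevanceVector (s : Finset (Fin m)) :
    Nfac (relevanceVector s) = #s * (m - #s) := by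
  simp [Nfac, relevanceVector]

theorem pairwiseLoss_relevanceVector (σ : Equiv.Perm (Fin m)) (s : Finset (Fin m)) :
    pairwiseLoss σ (relevanceVector s) = ∑ j ∈ s, (#{i ∈ sᶜ | σ i < σ j} : ℝ) := by
  unfold pairwiseLoss
  rw [sum_comm, ← sum_subset (subset_univ s) fun j _ hj => by simp [relevanceVector, hj]]
  refine sum_congr rfl fun j hj => ?_
  rw [← natCast_card_filter]
  congr 2
  ext i
  simp [relevanceVector, hj, and_comm]

theorem pairwiseLoss_relevanceVector_add_choose_two (σ : Equiv.Perm (Fin m)) (s : Finset (Fin m)) :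
    pairwiseLoss σ (relevanceVector s) + (#s).choose 2 = ∑ j ∈ s, (σ j : ℝ) := by
  have split_below (j : Fin m) :
      #{i ∈ sᶜ | σ i < σ j} + #{i ∈ s | σ i < σ j} = (σ j : ℕ) := calc
    _ = #{i | σ i < σ j} := by
      rw [← card_union_of_disjoint (disjoint_filter_filter disjoint_compl_left), ← filter_union,
        union_comm, union_compl]
    _ = #(Iio (σ j)) := card_equiv σ fun i => by simp
    _ = σ j := Fin.card_Iio _
  rw [pairwiseLoss_relevanceVector, ← sum_card_filter_lt_eq_choose_two σ.injective]
  exact_mod_cast (sum_add_distrib.symm.trans (sum_congr rfl fun j _ => split_below j))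

/-- Division by zero agrees with the convention `AUC = 0` for `N = 0`. -/
theorem auc_eq_div (σ : Equiv.Perm (Fin m)) (r : Fin m → Bool) :
    auc σ r = pairwiseLoss σ r / Nfac r := by
  unfold auc
  split_ifs with hN
  · rw [hN, div_zero]
  · rfl

theorem auc_sub_auc_relevanceVector (σ τ : Equiv.Perm (Fin m)) (s : Finset (Fin m)) :
    auc σ (relevanceVector s) - auc τ (relevanceVector s) =
      (∑ j ∈ s, ((σ j : ℝ) - τ j)) / (#s * (m - #s)) := by
  rw [auc_eq_div, auc_eq_div, ← sub_div, Nfac_relevanceVector, sum_sub_distrib,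
    ← pairwiseLoss_relevanceVector_add_choose_two, ← pairwiseLoss_relevanceVector_add_choose_two,
    add_sub_add_right_eq_sub]

theorem rank_sub_add_rank_sub_eq_zero_of_mem_modularFunctions (hm : 4 ≤ m)
    {σ τ : Equiv.Perm (Fin m)}
    (h : (fun r => auc σ r - auc τ r) ∈ modularFunctions ℝ (Fin m → Bool))
    {i j : Fin m} (hij : i ≠ j) : ((σ i : ℝ) - τ i) + ((σ j : ℝ) - τ j) = 0 := by
  have modular := h (relevanceVector {i}) (relevanceVector {j})
  simp only [← relevanceVector_union, ← relevanceVector_inter,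
    auc_sub_auc_relevanceVector] at modular
  rw [← insert_eq, sum_pair hij, card_pair hij,
    inter_singleton_of_notMem (notMem_singleton.2 hij.symm)] at modular
  simp only [sum_empty, zero_div, add_zero, sum_singleton, card_singleton, Nat.cast_one, one_mul,
    Nat.cast_ofNat, ← add_div] at modular
  have hm' : (4 : ℝ) ≤ m := by exact_mod_cast hm
  rw [div_eq_div_iff (by linarith) (by linarith)] at modular
  have product_eq_zero : (((σ i : ℝ) - τ i) + ((σ j : ℝ) - τ j)) * (m - 3) = 0 := by
    linear_combination -modular
  exact (mul_eq_zero.1 product_eq_zero).resolve_right (by linarith)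

end

theorem auc_global_observability_fails_m4_general {m : ℕ} (hm : 4 ≤ m)
    {σ τ : Equiv.Perm (Fin m)} (hστ : σ ≠ τ) :
    (fun r => auc σ r - auc τ r) ∉
      Submodule.span ℝ (Set.range fun p : Fin m × Bool => chi p.1 p.2) := by
  intro h
  have rank_sub_eq_zero : (fun i => (σ i : ℝ) - τ i) = 0 :=
    eq_zero_of_pairwise_add_eq_zero (by rw [Fintype.card_fin]; lia) fun _ _ hij =>
      rank_sub_add_rank_sub_eq_zero_of_mem_modularFunctions hm (span_chi_le_modularFunctions h) hij
  refine hστ (Equiv.ext fun i => Fin.ext ?_)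
  exact_mod_cast sub_eq_zero.1 (congrFun rank_sub_eq_zero i)

/-- Global observability fails for AUC at m = 4: the loss difference between the identity
ranking σ₁ and the reversal ranking σ₂₄ (σ₂₄(i) = 5 − i, in Lean `Fin.revPerm`) does not
lie in the span of the columns χ_{j,b} of the transposed signal matrices. -/
theorem auc_global_observability_fails_m4 :
    (fun r : Fin 4 → Bool => auc 1 r - auc Fin.revPerm r) ∉
      Submodule.span ℝ (Set.range fun p : Fin 4 × Bool => chi p.1 p.2) :=
  auc_global_observability_fails_m4_general le_rfl (by decide)
end
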